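/- Let f be a strategyproof, 0-randomly dictatorial SDS on n voters and m alternatives that is β-ex post efficient for some β ∈ [0,1] and that can be represented as a convex combination of unilaterals. Then there exists a strategyproof, 0-randomly dictatorial SDS f* on m(m−1)/2 voters (and the same m alternatives) that can be represented as a convex combination of unilaterals, is β-ex post efficient for the same β, and satisfies: (i) for every voter i there is a pair of alternatives {x_i, y_i} such that f* is 0-randomly dictatorial for x_i, y_i in voter i (i.e., f*(R) = f*(R^{i:y_i x_i}) for every profile R in which voter i ranks x_i first and y_i second), and {x_i, y_i} ≠ {x_j, y_j} whenever i ≠ j; (ii) there is a constant δ such that f*(R^{i:cb}, c) − f*(R, c) = δ for all voters i, all alternatives a, b with {a,b} = {x_i, y_i}, all c ∉ {x_i, y_i}, and all profiles R in which voter i ranks a first, b second, and c third; (iii) there is a scoring vector (a_1,…,a_m) with a_1 = a_2 ≥ 0 and a_3 ≥ … ≥ a_m ≥ 0 such that f*(R, x) = ∑_{i} a_{r_i(x)} for every profile R in which every voter i ranks x_i and y_i as his two best alternatives, where r_i(x) = |{y ∈ A : y ⪰_i x}|. -/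

import Mathlib

open Finset

noncomputable section

/-- A preference profile: each voter's strict linear order on the `m`
alternatives is encoded as a ranking permutation, where `R i x` is the rank of
alternative `x` for voter `i` (rank `0` = most preferred). Voter `i` strictly
prefers `x` to `y` iff `R i x < R i y`. -/
abbrev Profile (n m : ℕ) := Fin n → Equiv.Perm (Fin m)

/-- `F R x` is the probability that the social decision scheme `F` assigns to
alternative `x` at profile `R`; `IsSDS F` says every `F R` is a lottery. -/
def IsSDS {n m : ℕ} (F : Profile n m → Fin m → ℝ) : Prop :=
  (∀ R x, 0 ≤ F R x) ∧ ∀ R, ∑ x, F R x = 1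

/-- Stochastic-dominance preference of voter `i` (with preferences as in `R`):
lottery `p` is weakly preferred to lottery `q`. -/
def SDPref {n m : ℕ} (R : Profile n m) (i : Fin n) (p q : Fin m → ℝ) : Prop :=
  ∀ x : Fin m,
    ∑ y ∈ univ.filter (fun y => R i y < R i x), q y ≤
      ∑ y ∈ univ.filter (fun y => R i y < R i x), p y

/-- Strategyproofness: the truthful outcome is SD-preferred to any outcome
obtainable by a unilateral deviation. -/
def Strategyproof {n m : ℕ} (F : Profile n m → Fin m → ℝ) : Prop :=
  ∀ (R R' : Profile n m) (i : Fin n),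
    (∀ j, j ≠ i → R j = R' j) → SDPref R i (F R) (F R')

/-- Anonymity: permuting the voters does not change the outcome. -/
def Anonymous {n m : ℕ} (F : Profile n m → Fin m → ℝ) : Prop :=
  ∀ (π : Equiv.Perm (Fin n)) (R : Profile n m), F (fun i => R (π i)) = F R

/-- The profile obtained from `R` by relabeling the alternatives by `τ`
(in `relabel τ R`, alternative `τ x` gets the rank that `x` has in `R`). -/
def relabel {n m : ℕ} (τ : Equiv.Perm (Fin m)) (R : Profile n m) : Profile n m :=
  fun i => τ.symm.trans (R i)

/-- Neutrality: relabeling the alternatives permutes the outcome accordingly. -/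
def Neutral {n m : ℕ} (F : Profile n m → Fin m → ℝ) : Prop :=
  ∀ (τ : Equiv.Perm (Fin m)) (R : Profile n m) (x : Fin m),
    F (relabel τ R) (τ x) = F R x

/-- The supporting size `n_{xy}(R)`: the number of voters preferring `x` to `y`. -/
def suppSize {n m : ℕ} (R : Profile n m) (x y : Fin m) : ℕ :=
  (univ.filter (fun i => R i x < R i y)).card

/-- `x` is the Condorcet winner of `R`. -/
def CondorcetWinner {n m : ℕ} (R : Profile n m) (x : Fin m) : Prop :=
  ∀ y, y ≠ x → suppSize R y x < suppSize R x y

/-- `α`-Condorcet-consistency. -/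
def CondorcetConsistent {n m : ℕ} (F : Profile n m → Fin m → ℝ) (α : ℝ) : Prop :=
  ∀ R x, CondorcetWinner R x → α ≤ F R x

/-- `x` is Pareto-dominated in `R`. -/
def ParetoDominated {n m : ℕ} (R : Profile n m) (x : Fin m) : Prop :=
  ∃ y, ∀ i, R i y < R i x

/-- `β`-ex post efficiency. -/
def ExPostEff {n m : ℕ} (F : Profile n m → Fin m → ℝ) (β : ℝ) : Prop :=
  ∀ R x, ParetoDominated R x → F R x ≤ β

/-- The probability that the dictatorial SDS of voter `i` assigns to `x`:
`1` if `x` is voter `i`'s most preferred alternative and `0` otherwise. -/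
def dictProb {n m : ℕ} (R : Profile n m) (i : Fin n) (x : Fin m) : ℝ :=
  if ∀ y, R i x ≤ R i y then 1 else 0

/-- `d` is a random dictatorship. -/
def IsRandDict {n m : ℕ} (d : Profile n m → Fin m → ℝ) : Prop :=
  ∃ δ : Fin n → ℝ, (∀ i, 0 ≤ δ i) ∧ ∑ i, δ i = 1 ∧
    ∀ R x, d R x = ∑ i, δ i * dictProb R i x

/-- `F` can be written as `γ d + (1 - γ) g` with `d` a random dictatorship and
`g` a strategyproof SDS. -/
def DecomposesAt {n m : ℕ} (F : Profile n m → Fin m → ℝ) (γ : ℝ) : Prop :=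
  ∃ d g : Profile n m → Fin m → ℝ, IsRandDict d ∧ IsSDS g ∧ Strategyproof g ∧
    ∀ R x, F R x = γ * d R x + (1 - γ) * g R x

/-- `F` is `γ`-randomly dictatorial: `γ ∈ [0,1]` is the maximal value admitting
a decomposition `F = γ d + (1 - γ) g` as above. -/
def RandDictDegree {n m : ℕ} (F : Profile n m → Fin m → ℝ) (γ : ℝ) : Prop :=
  0 ≤ γ ∧ γ ≤ 1 ∧ DecomposesAt F γ ∧
    ∀ γ', 0 ≤ γ' → γ' ≤ 1 → DecomposesAt F γ' → γ' ≤ γ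

/-- The profile `R^{i:yx}` obtained from `R` by swapping `x` and `y` in voter
`i`'s preference relation (used when `x` is ranked directly above `y`). -/
def swapTop {n m : ℕ} (R : Profile n m) (i : Fin n) (x y : Fin m) : Profile n m :=
  Function.update R i ((R i).trans (Equiv.swap (R i x) (R i y)))

/-- The weight vector `b` defining the randomized Copeland rule:
`b k = 2/(m(m-1))` for `k > n/2`, `b k = 1/(m(m-1))` for `k = n/2`, `b k = 0`
for `k < n/2`. -/
def copelandWeight (n m : ℕ) (k : ℕ) : ℝ :=
  if n < 2 * k then 2 / ((m : ℝ) * ((m : ℝ) - 1))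
  else if 2 * k = n then 1 / ((m : ℝ) * ((m : ℝ) - 1))
  else 0

/-- The randomized Copeland rule `f_C(R, x) = ∑_{y ≠ x} b_{n_{xy}(R)}`. -/
def randCopeland (n m : ℕ) : Profile n m → Fin m → ℝ :=
  fun R x => ∑ y ∈ univ.filter (fun y => y ≠ x), copelandWeight n m (suppSize R x y)

/-- A point voting SDS, given by a scoring vector `a` (indexed by ranks
`0, …, m-1`, i.e. `a k` is the score of the `(k+1)`-st ranked alternative). -/
structure PointVoting (n m : ℕ) where
  a : ℕ → ℝ
  mono : ∀ k l : ℕ, k ≤ l → l < m → a l ≤ a k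
  nonneg : ∀ k : ℕ, k < m → 0 ≤ a k
  sum_eq : ∑ k ∈ Finset.range m, a k = 1 / (n : ℝ)

/-- The value of a point voting SDS. -/
def pvVal {n m : ℕ} (pv : PointVoting n m) : Profile n m → Fin m → ℝ :=
  fun R x => ∑ i, pv.a (R i x : ℕ)

/-- A supporting size SDS, given by a vector `b` indexed by supporting sizes
`0, …, n`. -/
structure SupportingSize (n m : ℕ) where
  b : ℕ → ℝ
  mono : ∀ k l : ℕ, k ≤ l → l ≤ n → b k ≤ b l
  nonneg : ∀ k : ℕ, k ≤ n → 0 ≤ b k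
  pair_eq : ∀ k : ℕ, k ≤ n → b k + b (n - k) = 2 / ((m : ℝ) * ((m : ℝ) - 1))

/-- The value of a supporting size SDS. -/
def ssVal {n m : ℕ} (S : SupportingSize n m) : Profile n m → Fin m → ℝ :=
  fun R x => ∑ y ∈ univ.filter (fun y => y ≠ x), S.b (suppSize R x y)

/-- A duple: a strategyproof SDS that puts positive probability on at most two
fixed alternatives. -/
def IsDuple {n m : ℕ} (g : Profile n m → Fin m → ℝ) : Prop :=
  IsSDS g ∧ Strategyproof g ∧ ∃ x y : Fin m, ∀ R z, z ≠ x → z ≠ y → g R z = 0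

/-- A unilateral: a strategyproof SDS that depends only on the preferences of a
single fixed voter. -/
def IsUnilateral {n m : ℕ} (g : Profile n m → Fin m → ℝ) : Prop :=
  IsSDS g ∧ Strategyproof g ∧
    ∃ i : Fin n, ∀ R R' : Profile n m, R i = R' i → g R = g R'

/-- `F` is a convex combination of SDSs satisfying the property `P`. -/
def MixOf {n m : ℕ} (P : (Profile n m → Fin m → ℝ) → Prop)
    (F : Profile n m → Fin m → ℝ) : Prop :=
  ∃ (K : ℕ) (w : Fin K → ℝ) (g : Fin K → Profile n m → Fin m → ℝ),
    (∀ k, 0 ≤ w k) ∧ ∑ k, w k = 1 ∧ (∀ k, P (g k)) ∧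
    ∀ R x, F R x = ∑ k, w k * g k R x

/-- The uniform random dictatorship. -/
def uniformRD (n m : ℕ) : Profile n m → Fin m → ℝ :=
  fun R x => (1 / (n : ℝ)) * ∑ i, dictProb R i x

/-- The uniform lottery. -/
def uniformLottery (n m : ℕ) : Profile n m → Fin m → ℝ :=
  fun _ _ => 1 / (m : ℝ)

def GoodU {m : ℕ} (u : Equiv.Perm (Fin m) → Fin m → ℝ) (L : ℝ) : Prop :=
  (∀ σ x, 0 ≤ u σ x) ∧ (∀ σ, ∑ x, u σ x = L) ∧
  ∀ σ σ' : Equiv.Perm (Fin m), ∀ x,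
    ∑ y ∈ univ.filter (fun y => σ y < σ x), u σ' y ≤
      ∑ y ∈ univ.filter (fun y => σ y < σ x), u σ y

def UpperS {m : ℕ} (σ : Equiv.Perm (Fin m)) (U : Finset (Fin m)) : Prop :=
  ∀ y ∈ U, ∀ z, z ∉ U → σ y < σ z

lemma good_upper {m : ℕ} {u : Equiv.Perm (Fin m) → Fin m → ℝ} {L : ℝ} (h : GoodU u L)
    {σ : Equiv.Perm (Fin m)} {U : Finset (Fin m)} (hU : UpperS σ U) (σ' : Equiv.Perm (Fin m)) :
    ∑ y ∈ U, u σ' y ≤ ∑ y ∈ U, u σ y := by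
  by_cases hu : Uᶜ.Nonempty
  · obtain ⟨x, hx, hmin⟩ := Finset.exists_min_image Uᶜ (fun y => σ y) hu
    have : univ.filter (fun y => σ y < σ x) = U := by
      ext y
      simp only [mem_filter, mem_univ, true_and]
      constructor
      · intro hy
        by_contra hc
        exact absurd (hmin y (by simpa using hc)) (not_le.mpr hy)
      · intro hy
        exact hU y hy x (by simpa using hx)
    have h3 := h.2.2 σ σ' x
    rwa [this] at h3
  · have : U = univ := by
      rw [Finset.not_nonempty_iff_eq_empty] at hu
      simpa using hu
    subst this
    rw [h.2.1, h.2.1]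

lemma good_upper_eq {m : ℕ} {u : Equiv.Perm (Fin m) → Fin m → ℝ} {L : ℝ} (h : GoodU u L)
    {σ σ' : Equiv.Perm (Fin m)} {U : Finset (Fin m)} (hU : UpperS σ U) (hU' : UpperS σ' U) :
    ∑ y ∈ U, u σ' y = ∑ y ∈ U, u σ y :=
  le_antisymm (good_upper h hU σ') (good_upper h hU' σ)

lemma exists_key {m : ℕ} (key : Fin m → ℕ) :
    ∃ σ : Equiv.Perm (Fin m), ∀ a b, key a < key b → σ a < σ b := by
  refine ⟨(Tuple.sort key).symm, fun a b hab => ?_⟩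
  by_contra hc
  have := Tuple.monotone_sort key (not_lt.mp hc)
  simp at this
  omega

/-- Key quantitative bound. -/
lemma good_gap {m : ℕ} {u : Equiv.Perm (Fin m) → Fin m → ℝ} {L ε : ℝ} (h : GoodU u L)
    {σ σ' σ₀ σ₁ : Equiv.Perm (Fin m)} {U : Finset (Fin m)} {y z : Fin m}
    (hU : UpperS σ U) (hy : y ∈ U) (hz : z ∉ U) (hz' : UpperS σ' {z})
    (h1 : UpperS σ₀ {y}) (h2 : UpperS σ₀ {y, z}) (h3 : UpperS σ₁ {z}) (h4 : UpperS σ₁ {y, z})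
    (hε : ε ≤ u σ₀ y - u σ₁ y) :
    ∑ x ∈ U, u σ' x + ε ≤ ∑ x ∈ U, u σ x := by
  have hyz : y ≠ z := fun e => hz (e ▸ hy)
  obtain ⟨σ₂, h₂⟩ := exists_key (fun w => if w = z then 0 else if w = y then 1 else
    if w ∈ U then 2 else 3)
  obtain ⟨σ₃, h₃⟩ := exists_key (fun w => if w = y then 0 else if w = z then 1 else
    if w ∈ U then 2 else 3)
  have a1 : UpperS σ₂ {z} := by
    intro a ha b hb
    apply h₂
    grind
  have a2 : UpperS σ₂ {y, z} := by
    intro a ha b hb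
    apply h₂
    grind
  have a3 : UpperS σ₂ (insert z U) := by
    intro a ha b hb
    apply h₂
    grind
  have b1 : UpperS σ₃ {y} := by
    intro a ha b hb
    apply h₃
    grind
  have b2 : UpperS σ₃ {y, z} := by
    intro a ha b hb
    apply h₃
    grind
  have b3 : UpperS σ₃ (insert z U) := by
    intro a ha b hb
    apply h₃
    grind
  have e1 := good_upper h a3 σ'
  have e2 := good_upper_eq h a1 hz'
  have e3 := good_upper_eq h a3 b3
  have e4 := good_upper_eq h h1 b1
  have e5 := good_upper_eq h h3 a1
  have e6 := good_upper_eq h h2 b2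
  have e7 := good_upper_eq h h4 a2
  have e8 := good_upper_eq h h2 h4
  have e9 := good_upper h hU σ₃
  simp only [Finset.sum_insert hz, Finset.sum_pair hyz, Finset.sum_singleton] at *
  linarith

lemma pair_upper {k : ℕ} {σ : Equiv.Perm (Fin (k+2))} {y z : Fin (k+2)} (hy : σ y = 0)
    (hz : σ z = 1) {U : Finset (Fin (k+2))} (hyU : y ∈ U) (hzU : z ∈ U) (hU : UpperS σ U) :
    UpperS (σ.trans (Equiv.swap 0 1)) U := by
  intro a ha b hb
  have hb0 : σ b ≠ 0 := fun e => hb (by rw [← hy] at e; rwa [σ.injective e])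
  have hb1 : σ b ≠ 1 := fun e => hb (by rw [← hz] at e; rwa [σ.injective e])
  simp only [Equiv.trans_apply]
  rw [Equiv.swap_apply_of_ne_of_ne hb0 hb1]
  by_cases ha0 : σ a = 0
  · rw [ha0, Equiv.swap_apply_left, ← hz]; exact hU z hzU b hb
  by_cases ha1 : σ a = 1
  · rw [ha1, Equiv.swap_apply_right, ← hy]; exact hU y hyU b hb
  rw [Equiv.swap_apply_of_ne_of_ne ha0 ha1]
  exact hU a ha b hb

lemma upper_single {k : ℕ} {σ : Equiv.Perm (Fin (k+2))} {y : Fin (k+2)} (hy : σ y = 0) :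
    UpperS σ {y} := by
  intro a ha b hb
  simp only [mem_singleton] at ha hb
  subst ha
  rw [hy, Fin.pos_iff_ne_zero]
  intro e
  exact hb (σ.injective (e.trans hy.symm))

lemma upper_pair {k : ℕ} {σ : Equiv.Perm (Fin (k+2))} {y z : Fin (k+2)} (hy : σ y = 0)
    (hz : σ z = 1) : UpperS σ {y, z} := by
  intro a ha b hb
  simp only [mem_insert, mem_singleton, not_or] at ha hb
  have hb0 : σ b ≠ 0 := fun e => hb.1 (σ.injective (e.trans hy.symm))
  have hb1 : σ b ≠ 1 := fun e => hb.2 (σ.injective (e.trans hz.symm))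
  have hb0' : (σ b : ℕ) ≠ 0 := fun e => hb0 (Fin.ext (by simpa using e))
  have hb1' : (σ b : ℕ) ≠ 1 := fun e => hb1 (Fin.ext (by simpa using e))
  rcases ha with rfl | rfl
  · rw [hy, Fin.lt_def, Fin.val_zero]; omega
  · rw [hz, Fin.lt_def, Fin.val_one]; omega

lemma upper_below {m : ℕ} (σ : Equiv.Perm (Fin m)) (t : ℕ) :
    UpperS σ (univ.filter (fun w => (σ w : ℕ) < t)) := by
  intro a ha b hb
  simp at ha hb
  rw [Fin.lt_def]; omega

lemma good_swap_lt {k : ℕ} {u : Equiv.Perm (Fin (k+2)) → Fin (k+2) → ℝ} {L : ℝ}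
    (h : GoodU u L) {σ : Equiv.Perm (Fin (k+2))} {y z : Fin (k+2)} (hy : σ y = 0)
    (hz : σ z = 1) (hne : u (σ.trans (Equiv.swap 0 1)) ≠ u σ) :
    u (σ.trans (Equiv.swap 0 1)) y < u σ y := by
  have hyz : y ≠ z := by rintro rfl; rw [hy] at hz; simp at hz
  have hle := good_upper h (upper_single hy) (σ.trans (Equiv.swap 0 1))
  simp only [Finset.sum_singleton] at hle
  refine lt_of_le_of_ne hle fun heq => hne ?_
  have hp := good_upper_eq h (upper_pair hy hz)
    (pair_upper hy hz (by simp) (by simp) (upper_pair hy hz))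
  rw [Finset.sum_pair hyz, Finset.sum_pair hyz] at hp
  funext x
  by_cases hxy : x = y
  · rw [hxy, heq]
  by_cases hxz : x = z
  · rw [hxz]; linarith
  have hb0 : σ x ≠ 0 := fun e => hxy (σ.injective (e.trans hy.symm))
  have hb1 : σ x ≠ 1 := fun e => hxz (σ.injective (e.trans hz.symm))
  have hb0' : (σ x : ℕ) ≠ 0 := fun e => hb0 (Fin.ext (by simpa using e))
  have hb1' : (σ x : ℕ) ≠ 1 := fun e => hb1 (Fin.ext (by simpa using e))
  have v0 : (σ y : ℕ) = 0 := by rw [hy]; rfl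
  have v1 : (σ z : ℕ) = 1 := by rw [hz]; rfl
  have hU := upper_below σ (σ x : ℕ)
  have hU' := upper_below σ ((σ x : ℕ) + 1)
  have hins : univ.filter (fun w => (σ w : ℕ) < (σ x : ℕ) + 1) =
      insert x (univ.filter (fun w => (σ w : ℕ) < (σ x : ℕ))) := by
    ext w
    simp only [mem_filter, mem_univ, true_and, mem_insert]
    constructor
    · intro hw
      rcases Nat.lt_succ_iff_lt_or_eq.mp hw with hw | hw
      · exact Or.inr hw
      · exact Or.inl (σ.injective (Fin.ext hw))
    · rintro (rfl | hw) <;> omega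
  have q1 := good_upper_eq h hU (pair_upper hy hz (by simp only [mem_filter, mem_univ, true_and]; omega)
    (by simp only [mem_filter, mem_univ, true_and]; omega) hU)
  have q2 := good_upper_eq h hU' (pair_upper hy hz (by simp only [mem_filter, mem_univ, true_and]; omega)
    (by simp only [mem_filter, mem_univ, true_and]; omega) hU')
  rw [hins, Finset.sum_insert (by simp), Finset.sum_insert (by simp)] at q2
  linarith

lemma dict_sum {n k : ℕ} (R : Profile n (k+1)) (i : Fin n) (U : Finset (Fin (k+1))) :
    ∑ x ∈ U, dictProb R i x = if (R i).symm 0 ∈ U then 1 else 0 := by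
  have : ∀ x, dictProb R i x = if (R i).symm 0 = x then 1 else 0 := by
    intro x
    unfold dictProb
    congr 1
    apply propext
    constructor
    · intro hx
      have := hx ((R i).symm 0)
      simp at this
      rw [← this]; simp
    · rintro rfl y
      simp
  simp only [this]
  rw [Finset.sum_ite_eq]

lemma dict_isRD {n m : ℕ} (i : Fin n) : IsRandDict (fun (R : Profile n m) x => dictProb R i x) := by
  refine ⟨fun j => if i = j then 1 else 0, fun j => by positivity, by simp, fun R x => by simp⟩

lemma sep_sp {n m : ℕ} {F : Profile n m → Fin m → ℝ}
    {u : Fin n → Equiv.Perm (Fin m) → Fin m → ℝ} {L : Fin n → ℝ} (hu : ∀ i, GoodU (u i) (L i))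
    (hF : ∀ R x, F R x = ∑ i, u i (R i) x) : Strategyproof F := by
  intro R R' i hR x
  simp only [hF]
  rw [Finset.sum_comm, Finset.sum_comm (t := univ)]
  apply Finset.sum_le_sum
  intro j _
  by_cases hj : j = i
  · subst hj; exact (hu j).2.2 _ _ _
  · rw [hR j hj]

lemma zero_pair {n k : ℕ} {F : Profile n (k+2) → Fin (k+2) → ℝ}
    {u : Fin n → Equiv.Perm (Fin (k+2)) → Fin (k+2) → ℝ} {L : Fin n → ℝ}
    (hu : ∀ i, GoodU (u i) (L i))
    (hS : IsSDS F) (hF : ∀ R x, F R x = ∑ i, u i (R i) x) (hrd : RandDictDegree F 0) (i : Fin n) :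
    ∃ y z, y ≠ z ∧ ∀ σ : Equiv.Perm (Fin (k+2)), σ y = 0 → σ z = 1 →
      u i (σ.trans (Equiv.swap 0 1)) = u i σ := by
  by_contra hcon
  push Not at hcon
  have key : ∀ p : {p : Fin (k+2) × Fin (k+2) // p.1 ≠ p.2}, ∃ σ : Equiv.Perm (Fin (k+2)),
      σ p.1.1 = 0 ∧ σ p.1.2 = 1 ∧ u i (σ.trans (Equiv.swap 0 1)) p.1.1 < u i σ p.1.1 := by
    intro p
    obtain ⟨σ, h1, h2, h3⟩ := hcon p.1.1 p.1.2 p.2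
    exact ⟨σ, h1, h2, good_swap_lt (hu i) h1 h2 h3⟩
  choose s hs0 hs1 hs2 using key
  have : Nonempty {p : Fin (k+2) × Fin (k+2) // p.1 ≠ p.2} := ⟨⟨(0, 1), by simp⟩⟩
  obtain ⟨q, hq⟩ := Finite.exists_min (fun p => u i (s p) p.1.1 -
    u i ((s p).trans (Equiv.swap 0 1)) p.1.1)
  obtain ⟨ε, he0, he1, heq⟩ : ∃ ε : ℝ, 0 < ε ∧ ε ≤ 1 / 2 ∧ ∀ p, ε ≤ u i (s p) p.1.1 -
      u i ((s p).trans (Equiv.swap 0 1)) p.1.1 := by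
    refine ⟨min (1/2) (u i (s q) q.1.1 - u i ((s q).trans (Equiv.swap 0 1)) q.1.1), ?_, ?_, ?_⟩
    · exact lt_min (by norm_num) (sub_pos.mpr (hs2 q))
    · exact min_le_left _ _
    · intro p; exact (min_le_right _ _).trans (hq p)
  have hsp := sep_sp hu hF
  have hpos : 0 < 1 - ε := by linarith
  have hdec : DecomposesAt F ε := by
    refine ⟨fun R x => dictProb R i x, fun R x => (F R x - ε * dictProb R i x) / (1 - ε),
      dict_isRD i, ⟨?_, ?_⟩, ?_, ?_⟩
    · intro R x
      apply div_nonneg _ hpos.le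
      by_cases hx : R i x = 0
      · have hd : dictProb R i x ≤ 1 := by unfold dictProb; split_ifs <;> norm_num
        obtain ⟨z, hz⟩ := exists_ne x
        have h1 := heq ⟨(x, z), hz.symm⟩
        have h2 := hs0 ⟨(x, z), hz.symm⟩
        have h3 := (hu i).1 ((s ⟨(x, z), hz.symm⟩).trans (Equiv.swap 0 1)) x
        have h4 := good_upper_eq (hu i) (upper_single h2) (upper_single hx)
        simp only [Finset.sum_singleton] at h4 h1
        have h5 : u i (R i) x ≤ F R x := by
          rw [hF]
          exact Finset.single_le_sum (f := fun j => u j (R j) x)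
            (fun j _ => (hu j).1 _ _) (Finset.mem_univ i)
        nlinarith
      · have : dictProb R i x = 0 := by
          unfold dictProb
          rw [if_neg]
          intro hh
          have := hh ((R i).symm 0)
          simp at this
          exact hx this
        rw [this]; simpa using hS.1 R x
    · intro R
      rw [← Finset.sum_div, Finset.sum_sub_distrib, ← Finset.mul_sum, hS.2, dict_sum]
      simp [hpos.ne']
    · intro R R' j hR x
      rw [← Finset.sum_div, ← Finset.sum_div]
      apply div_le_div_of_nonneg_right _ hpos.le
      rw [Finset.sum_sub_distrib, Finset.sum_sub_distrib, ← Finset.mul_sum, ← Finset.mul_sum,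
        dict_sum, dict_sum]
      have hsp' := hsp R R' j hR x
      by_cases hj : i = j
      · subst hj
        by_cases hx0 : R i x = 0
        · simp [hx0]
        have hin : (R i).symm 0 ∈ univ.filter (fun y => R i y < R i x) := by
          simp [Fin.pos_iff_ne_zero, hx0]
        rw [if_pos hin]
        split_ifs with hin'
        · linarith
        have hUp : UpperS (R i) (univ.filter (fun y => R i y < R i x)) := by
          intro a ha b hb
          simp at ha hb
          exact ha.trans_le hb
        have hne : (R i).symm 0 ≠ (R' i).symm 0 := fun e => hin' (e ▸ hin)
        have := good_gap (hu i) (σ' := R' i) hUp hin hin' (upper_single (by simp))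
          (upper_single (hs0 ⟨(_, _), hne⟩)) (upper_pair (hs0 ⟨(_, _), hne⟩) (hs1 ⟨(_, _), hne⟩))
          (upper_single (σ := (s ⟨(_, _), hne⟩).trans (Equiv.swap 0 1))
            (by simp only [Equiv.trans_apply]; rw [hs1 ⟨(_, _), hne⟩]; simp))
          (pair_upper (hs0 ⟨(_, _), hne⟩) (hs1 ⟨(_, _), hne⟩) (by simp) (by simp)
            (upper_pair (hs0 ⟨(_, _), hne⟩) (hs1 ⟨(_, _), hne⟩)))
          (heq ⟨(_, _), hne⟩)
        have hdiff : ∀ y, F R y - F R' y = u i (R i) y - u i (R' i) y := by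
          intro y
          rw [hF, hF, ← Finset.sum_sub_distrib]
          rw [Finset.sum_eq_single i]
          · intro b _ hb
            rw [hR b hb]; simp
          · simp
        have hd2 : ∑ y ∈ univ.filter (fun y => R i y < R i x), F R y -
            ∑ y ∈ univ.filter (fun y => R i y < R i x), F R' y =
            ∑ y ∈ univ.filter (fun y => R i y < R i x), u i (R i) y -
            ∑ y ∈ univ.filter (fun y => R i y < R i x), u i (R' i) y := by
          rw [← Finset.sum_sub_distrib, ← Finset.sum_sub_distrib]
          exact Finset.sum_congr rfl fun y _ => hdiff y
        linarith
      · rw [hR i hj]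
        linarith
    · intro R x
      field_simp
      ring
  have := hrd.2.2.2 ε he0.le (by linarith) hdec
  linarith

lemma extract {n m : ℕ} {F : Profile n m → Fin m → ℝ} (hmix : MixOf IsUnilateral F) :
    ∃ (u : Fin n → Equiv.Perm (Fin m) → Fin m → ℝ) (L : Fin n → ℝ),
      (∀ i, GoodU (u i) (L i)) ∧ (∀ R x, F R x = ∑ i, u i (R i) x) := by
  obtain ⟨K, w, g, hw, hw1, hg, hF⟩ := hmix
  choose hS hsp vot hv using hg
  refine ⟨fun i σ x => ∑ k with vot k = i, w k * g k (fun _ => σ) x,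
    fun i => ∑ k with vot k = i, w k, fun i => ⟨?_, ?_, ?_⟩, ?_⟩
  · intro σ x
    exact Finset.sum_nonneg fun k _ => mul_nonneg (hw k) ((hS k).1 _ _)
  · intro σ
    rw [Finset.sum_comm]
    apply Finset.sum_congr rfl
    intro k _
    rw [← Finset.mul_sum, (hS k).2, mul_one]
  · intro σ σ' x
    rw [Finset.sum_comm, Finset.sum_comm (t := univ.filter (fun k => vot k = i))]
    apply Finset.sum_le_sum
    intro k hk
    simp only [mem_filter, mem_univ, true_and] at hk
    rw [← Finset.mul_sum, ← Finset.mul_sum]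
    apply mul_le_mul_of_nonneg_left _ (hw k)
    have h1 := hsp k (fun _ => σ) (Function.update (fun _ => σ) i σ') i
      (fun j hj => by simp [hj]) x
    rwa [hv k (Function.update (fun _ => σ) i σ') (fun _ => σ') (by simp [hk])] at h1
  · intro R x
    rw [hF, ← Finset.sum_fiberwise univ vot]
    apply Finset.sum_congr rfl
    intro i _
    apply Finset.sum_congr rfl
    intro k hk
    simp only [mem_filter, mem_univ, true_and] at hk
    rw [hv k R (fun _ => R i) (by simp [hk])]

lemma good_sum {ι : Type*} {m : ℕ} (s : Finset ι) {u : ι → Equiv.Perm (Fin m) → Fin m → ℝ}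
    {L : ι → ℝ} (h : ∀ i, GoodU (u i) (L i)) :
    GoodU (fun σ x => ∑ i ∈ s, u i σ x) (∑ i ∈ s, L i) := by
  refine ⟨fun σ x => Finset.sum_nonneg fun i _ => (h i).1 _ _, fun σ => ?_, fun σ σ' x => ?_⟩
  · rw [Finset.sum_comm]
    exact Finset.sum_congr rfl fun i _ => (h i).2.1 _
  · rw [Finset.sum_comm, Finset.sum_comm (t := s)]
    exact Finset.sum_le_sum fun i _ => (h i).2.2 _ _ _

lemma good_smul {m : ℕ} {u : Equiv.Perm (Fin m) → Fin m → ℝ}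
    {L c : ℝ} (hc : 0 ≤ c) (h : GoodU u L) :
    GoodU (fun σ x => c * u σ x) (c * L) := by
  refine ⟨fun σ x => mul_nonneg hc (h.1 _ _), fun σ => ?_, fun σ σ' x => ?_⟩
  · rw [← Finset.mul_sum, h.2.1]
  · rw [← Finset.mul_sum, ← Finset.mul_sum]
    exact mul_le_mul_of_nonneg_left (h.2.2 _ _ _) hc

lemma good_relabel {m : ℕ} {u : Equiv.Perm (Fin m) → Fin m → ℝ}
    {L : ℝ} (τ : Equiv.Perm (Fin m)) (h : GoodU u L) :
    GoodU (fun σ x => u (τ.trans σ) (τ.symm x)) L := by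
  have key : ∀ σ σ' : Equiv.Perm (Fin m), ∀ x,
      ∑ y ∈ univ.filter (fun y => σ y < σ x), u (τ.trans σ') (τ.symm y) =
      ∑ y ∈ univ.filter (fun y => (τ.trans σ) y < (τ.trans σ) (τ.symm x)), u (τ.trans σ') y := by
    intro σ σ' x
    apply Finset.sum_equiv τ.symm
    · intro y; simp
    · intro y _; rfl
  refine ⟨fun σ x => h.1 _ _, fun σ => ?_, fun σ σ' x => ?_⟩
  · rw [Equiv.sum_comp τ.symm (fun x => u (τ.trans σ) x), h.2.1]
  · rw [key, key]; exact h.2.2 _ _ _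

lemma sep_mix {n k : ℕ} {F : Profile n (k+1) → Fin (k+1) → ℝ} (hS : IsSDS F)
    {u : Fin n → Equiv.Perm (Fin (k+1)) → Fin (k+1) → ℝ} {L : Fin n → ℝ}
    (hu : ∀ i, GoodU (u i) (L i))
    (hF : ∀ R x, F R x = ∑ i, u i (R i) x) : MixOf IsUnilateral F := by
  have hL : ∀ i, 0 ≤ L i := fun i => by
    rw [← (hu i).2.1 1]; exact Finset.sum_nonneg fun x _ => (hu i).1 _ _
  refine ⟨n, L, fun i R x => if L i = 0 then 1 / ((k:ℝ)+1) else (L i)⁻¹ * u i (R i) x, hL, ?_, ?_, ?_⟩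
  · have := hS.2 (fun _ => 1)
    simp only [hF] at this
    rw [Finset.sum_comm] at this
    rw [← this]
    exact Finset.sum_congr rfl fun i _ => ((hu i).2.1 _).symm
  · intro i
    by_cases h0 : L i = 0
    · simp only [h0, if_true]
      refine ⟨⟨fun R x => by positivity, fun R => ?_⟩, fun R R' j hR x => le_rfl, i, fun R R' h => rfl⟩
      simp
      field_simp
    · simp only [h0, if_false]
      have hg := good_smul (inv_nonneg.mpr (hL i)) (hu i)
      rw [inv_mul_cancel₀ h0] at hg
      refine ⟨⟨fun R x => hg.1 _ _, fun R => hg.2.1 _⟩, fun R R' j hR x => ?_, i,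
        fun R R' h => by simp only [h]⟩
      by_cases hj : i = j
      · subst hj; exact hg.2.2 _ _ _
      · simp only [hR i hj]; exact le_rfl
  · intro R x
    rw [hF]
    apply Finset.sum_congr rfl
    intro i _
    by_cases h0 : L i = 0
    · have h1 := (hu i).2.1 (R i)
      rw [h0, Finset.sum_eq_zero_iff_of_nonneg (fun x _ => (hu i).1 _ _)] at h1
      rw [h1 x (mem_univ x), h0]; simp
    · simp only [if_neg h0]
      rw [mul_inv_cancel_left₀ h0]

lemma rd_zero {n k : ℕ} (hn : 0 < n) {F : Profile n (k+2) → Fin (k+2) → ℝ} (hS : IsSDS F)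
    (hsp : Strategyproof F)
    (h : ∀ i, ∃ (σ : Equiv.Perm (Fin (k+2))) (y z : Fin (k+2)), σ y = 0 ∧ σ z = 1 ∧
      F (swapTop (fun _ => σ) i y z) = F (fun _ => σ)) : RandDictDegree F 0 := by
  refine ⟨le_rfl, zero_le_one, ⟨_, F, dict_isRD ⟨0, hn⟩, hS, hsp, by simp⟩, ?_⟩
  rintro γ h0 h1 ⟨d, g, ⟨δ, hδ0, hδ1, hd⟩, hgS, hgsp, hdec⟩
  obtain ⟨i, -, hi⟩ : ∃ i ∈ univ, 0 < δ i := by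
    apply Finset.exists_lt_of_sum_lt
    simp [hδ1]
  obtain ⟨σ, y, z, hy, hz, hF⟩ := h i
  have e := congrFun hF y
  rw [hdec, hdec] at e
  have hsw := hgsp (fun _ => σ) (swapTop (fun _ => σ) i y z) i (fun j hj => by simp [swapTop, hj]) z
  have hf : univ.filter (fun w => σ w < σ z) = {y} := by
    ext w
    simp only [mem_filter, mem_univ, true_and, mem_singleton]
    rw [hz, ← σ.injective.eq_iff, hy, Fin.lt_def, Fin.ext_iff]
    simp
  simp only [hf, Finset.sum_singleton] at hsw
  have hdd : d (fun _ => σ) y = d (swapTop (fun _ => σ) i y z) y + δ i := by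
    rw [hd, hd, ← sub_eq_iff_eq_add', ← Finset.sum_sub_distrib, Finset.sum_eq_single i]
    · have a1 : dictProb (fun _ : Fin n => σ) i y = 1 := by
        unfold dictProb; rw [if_pos]; intro w; simp [hy]
      have a2 : dictProb (swapTop (fun _ : Fin n => σ) i y z) i y = 0 := by
        unfold dictProb; rw [if_neg]; intro hw
        have := hw z
        simp [swapTop, hy, hz] at this
      rw [a1, a2]; ring
    · intro b _ hb
      have : dictProb (fun _ : Fin n => σ) b y = dictProb (swapTop (fun _ : Fin n => σ) i y z) b y := by
        unfold dictProb
        simp [swapTop, hb]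
      rw [this]; ring
    · simp
  rw [hdd] at e
  by_contra hc
  push Not at hc
  nlinarith [mul_pos hc hi, mul_nonneg (sub_nonneg.mpr h1) (sub_nonneg.mpr hsw)]

def TopS {m : ℕ} (σ : Equiv.Perm (Fin m)) (s : Finset (Fin m)) : Prop :=
  ∀ w ∈ s, (σ w : ℕ) ≤ 1

lemma top_image {k : ℕ} {σ : Equiv.Perm (Fin (k+2))} {s : Finset (Fin (k+2))} (hs : s.card = 2)
    (h : TopS σ s) : s.map σ.toEmbedding = {0, 1} := by
  apply Finset.eq_of_subset_of_card_le
  · intro w hw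
    obtain ⟨v, hv, rfl⟩ := Finset.mem_map.mp hw
    have := h v hv
    simp only [Equiv.coe_toEmbedding, mem_insert, mem_singleton, Fin.ext_iff, Fin.val_zero,
      Fin.val_one]
    omega
  · rw [Finset.card_map, hs]
    exact Finset.card_le_two

/-- The summand of the symmetrised rule belonging to the pair `s`. -/
def pairV {n k : ℕ} (u : Fin n → Equiv.Perm (Fin (k+2)) → Fin (k+2) → ℝ)
    (P : Fin n → Finset (Fin (k+2))) (s : Finset (Fin (k+2)))
    (σ : Equiv.Perm (Fin (k+2))) (x : Fin (k+2)) : ℝ :=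
  ((k+2).factorial : ℝ)⁻¹ * ∑ τ : Equiv.Perm (Fin (k+2)),
    ∑ i with (P i).map τ.toEmbedding = s, u i (τ.trans σ) (τ.symm x)

lemma pairV_good {n k : ℕ} {u : Fin n → Equiv.Perm (Fin (k+2)) → Fin (k+2) → ℝ} {L : Fin n → ℝ}
    (hu : ∀ i, GoodU (u i) (L i))
    (P : Fin n → Finset (Fin (k+2))) (s : Finset (Fin (k+2))) : ∃ M, GoodU (pairV u P s) M :=
  ⟨_, good_smul (by positivity) (good_sum _ (fun τ => good_sum _ (fun i => good_relabel τ (hu i))))⟩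

lemma pairV_neutral {n k : ℕ} (u : Fin n → Equiv.Perm (Fin (k+2)) → Fin (k+2) → ℝ)
    (P : Fin n → Finset (Fin (k+2))) (s : Finset (Fin (k+2))) (ρ σ : Equiv.Perm (Fin (k+2)))
    (x : Fin (k+2)) :
    pairV u P s σ x = pairV u P (s.map ρ.toEmbedding) (ρ.symm.trans σ) (ρ x) := by
  unfold pairV
  congr 1
  apply Fintype.sum_equiv (Equiv.mulLeft ρ)
  intro τ
  apply Finset.sum_congr
  · ext i
    simp only [mem_filter, mem_univ, true_and]
    have : (P i).map ((Equiv.mulLeft ρ) τ).toEmbedding =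
        ((P i).map τ.toEmbedding).map ρ.toEmbedding := by
      rw [Finset.map_map]; rfl
    rw [this, Finset.map_inj]
  · intro i _
    have h1 : ((Equiv.mulLeft ρ) τ).trans (ρ.symm.trans σ) = τ.trans σ := by
      ext w; simp
    have h2 : ((Equiv.mulLeft ρ) τ).symm (ρ x) = τ.symm x := by
      rw [Equiv.symm_apply_eq]; simp
    rw [h1, h2]

lemma pairV_zero {n k : ℕ} {u : Fin n → Equiv.Perm (Fin (k+2)) → Fin (k+2) → ℝ}
    {P : Fin n → Finset (Fin (k+2))}
    (hP : ∀ i σ, TopS σ (P i) → u i (σ.trans (Equiv.swap 0 1)) = u i σ)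
    {s : Finset (Fin (k+2))} {σ : Equiv.Perm (Fin (k+2))} (hσ : TopS σ s) :
    pairV u P s (σ.trans (Equiv.swap 0 1)) = pairV u P s σ := by
  funext x
  unfold pairV
  congr 1
  apply Finset.sum_congr rfl
  intro τ _
  apply Finset.sum_congr rfl
  intro i hi
  simp only [mem_filter, mem_univ, true_and] at hi
  rw [← Equiv.trans_assoc, hP i]
  intro w hw
  apply hσ
  rw [← hi]
  exact Finset.mem_map.mpr ⟨w, hw, rfl⟩

lemma pairV_ref {n k : ℕ} (u : Fin n → Equiv.Perm (Fin (k+2)) → Fin (k+2) → ℝ)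
    (P : Fin n → Finset (Fin (k+2))) {s : Finset (Fin (k+2))} (hs : s.card = 2)
    {σ : Equiv.Perm (Fin (k+2))} (hσ : TopS σ s) (σ' : Equiv.Perm (Fin (k+2))) (x : Fin (k+2)) :
    pairV u P s σ' x = pairV u P {0, 1} (σ.symm.trans σ') (σ x) := by
  rw [pairV_neutral u P s σ, top_image hs hσ]

lemma pairV_rank {n k : ℕ} (u : Fin n → Equiv.Perm (Fin (k+2)) → Fin (k+2) → ℝ)
    (P : Fin n → Finset (Fin (k+2))) {s : Finset (Fin (k+2))} (hs : s.card = 2)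
    {σ : Equiv.Perm (Fin (k+2))} (hσ : TopS σ s) (x : Fin (k+2)) :
    pairV u P s σ x = pairV u P {0, 1} 1 (σ x) := by
  rw [pairV_ref u P hs hσ, Equiv.symm_trans_self]; rfl

lemma pairV_mono {n k : ℕ} {u : Fin n → Equiv.Perm (Fin (k+2)) → Fin (k+2) → ℝ} {L : Fin n → ℝ}
    (hu : ∀ i, GoodU (u i) (L i)) (P : Fin n → Finset (Fin (k+2))) {a b : Fin (k+2)}
    (ha : 2 ≤ (a : ℕ)) (hab : a ≤ b) : pairV u P {0, 1} 1 b ≤ pairV u P {0, 1} 1 a := by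
  obtain ⟨M, hM⟩ := pairV_good hu P {0, 1}
  have hab' : (a : ℕ) ≤ b := hab
  have hT : TopS (Equiv.swap a b) ({0, 1} : Finset (Fin (k+2))) := by
    intro w hw
    have : (w : ℕ) ≤ 1 := by
      simp only [mem_insert, mem_singleton] at hw
      rcases hw with rfl | rfl <;> simp
    rw [Equiv.swap_apply_of_ne_of_ne]
    · exact this
    · rintro rfl; omega
    · rintro rfl; omega
  have h1 := pairV_rank u P (by simp) hT a
  rw [Equiv.swap_apply_left] at h1
  rw [← h1]
  have U1 : UpperS 1 (univ.filter (fun w : Fin (k+2) => (w : ℕ) < a)) := by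
    intro y hy z hz
    simp only [mem_filter, mem_univ, true_and] at hy hz
    simp only [Equiv.Perm.one_apply, Fin.lt_def]; omega
  have U2 : UpperS 1 (insert a (univ.filter (fun w : Fin (k+2) => (w : ℕ) < a))) := by
    intro y hy z hz
    simp only [mem_insert, mem_filter, mem_univ, true_and, Fin.ext_iff] at hy hz
    simp only [Equiv.Perm.one_apply, Fin.lt_def]; omega
  have U3 : UpperS (Equiv.swap a b) (univ.filter (fun w : Fin (k+2) => (w : ℕ) < a)) := by
    intro y hy z hz
    simp only [mem_filter, mem_univ, true_and] at hy hz
    rw [Equiv.swap_apply_of_ne_of_ne (by rintro rfl; omega) (by rintro rfl; omega), Fin.lt_def]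
    rw [Equiv.swap_apply_def]
    split_ifs <;> omega
  have e1 := good_upper_eq hM U1 U3
  have e2 := good_upper hM U2 (Equiv.swap a b)
  rw [Finset.sum_insert (by simp), Finset.sum_insert (by simp)] at e2
  linarith

lemma exists_top {k : ℕ} {x y : Fin (k+2)} (h : x ≠ y) :
    ∃ σ : Equiv.Perm (Fin (k+2)), σ x = 0 ∧ σ y = 1 := by
  obtain ⟨σ, hσ⟩ := exists_key (fun w => if w = x then 0 else if w = y then 1 else 2)
  have h1 : UpperS σ {x} := by
    intro a ha b hb; apply hσ; grind
  have hx : σ x = 0 := by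
    by_contra hc
    have := h1 x (by simp) (σ.symm 0) (by
      simp only [mem_singleton]; intro e; apply hc; rw [← e]; simp)
    simp at this
  refine ⟨σ, hx, ?_⟩
  by_contra hc
  have hne : σ.symm 1 ≠ y := fun e => hc (by rw [← e]; simp)
  have hne' : σ.symm 1 ≠ x := fun e => by
    rw [← e] at hx; simp at hx
  have := hσ y (σ.symm 1) (by simp [hne, hne', h.symm])
  rw [Equiv.apply_symm_apply, Fin.lt_def, Fin.val_one] at this
  have h0 : σ y = 0 := Fin.ext (by rw [Fin.val_zero]; omega)
  exact h (σ.injective (hx.trans h0.symm))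

lemma normal_form_aux (n k N : ℕ) (hn : 0 < n) (hN : N = (k+2).choose 2) (β : ℝ)
    (F : Profile n (k+2) → Fin (k+2) → ℝ) (hF : IsSDS F)
    (hrd : RandDictDegree F 0) (heff : ExPostEff F β)
    (hmix : MixOf IsUnilateral F) :
    ∃ F' : Profile N (k+2) → Fin (k+2) → ℝ,
      IsSDS F' ∧ Strategyproof F' ∧ RandDictDegree F' 0 ∧ ExPostEff F' β ∧
      MixOf IsUnilateral F' ∧
      ∃ xy : Fin N → Fin (k+2) × Fin (k+2),
        (∀ i, (xy i).1 ≠ (xy i).2) ∧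
        (∀ i j, i ≠ j →
          ({(xy i).1, (xy i).2} : Finset (Fin (k+2))) ≠ {(xy j).1, (xy j).2}) ∧
        (∀ (i : Fin N) (R : Profile N (k+2)),
          (R i ((xy i).1) : ℕ) = 0 → (R i ((xy i).2) : ℕ) = 1 →
          F' (swapTop R i (xy i).1 (xy i).2) = F' R) ∧
        (∃ δ : ℝ, ∀ (i : Fin N) (a b c : Fin (k+2))
            (R : Profile N (k+2)),
          ({a, b} : Finset (Fin (k+2))) = {(xy i).1, (xy i).2} →
          c ≠ (xy i).1 → c ≠ (xy i).2 →
          (R i a : ℕ) = 0 → (R i b : ℕ) = 1 → (R i c : ℕ) = 2 →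
          F' (swapTop R i b c) c - F' R c = δ) ∧
        (∃ a : ℕ → ℝ, a 0 = a 1 ∧ 0 ≤ a 1 ∧
          (∀ p l : ℕ, 2 ≤ p → p ≤ l → l < k+2 → a l ≤ a p) ∧
          (∀ p : ℕ, p < k+2 → 0 ≤ a p) ∧
          ∀ R : Profile N (k+2),
            (∀ i, (R i ((xy i).1) : ℕ) ≤ 1 ∧ (R i ((xy i).2) : ℕ) ≤ 1) →
            ∀ x, F' R x = ∑ i, a (R i x : ℕ)) := by
  obtain ⟨u, L, hu, hsep⟩ := extract hmix
  have hz := zero_pair hu hF hsep hrd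
  choose y z hyz hz using hz
  set P : Fin n → Finset (Fin (k+2)) := fun i => {y i, z i} with hPdef
  have hPc : ∀ i, (P i).card = 2 := fun i => Finset.card_pair (hyz i)
  have hP : ∀ i σ, TopS σ (P i) → u i (σ.trans (Equiv.swap 0 1)) = u i σ := by
    intro i σ hσ
    have h1 := hσ (y i) (by simp [hPdef])
    have h2 := hσ (z i) (by simp [hPdef])
    have h3 : (σ (y i) : ℕ) ≠ σ (z i) := fun e => hyz i (σ.injective (Fin.ext e))
    by_cases h0 : (σ (y i) : ℕ) = 0
    · exact hz i σ (Fin.ext h0) (Fin.ext (by rw [Fin.val_one]; omega))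
    · have a1 : σ (y i) = 1 := Fin.ext (by rw [Fin.val_one]; omega)
      have a2 : σ (z i) = 0 := Fin.ext (by rw [Fin.val_zero]; omega)
      have := hz i (σ.trans (Equiv.swap 0 1)) (by simp [a1]) (by simp [a2])
      rw [← this, Equiv.trans_assoc]
      congr 1
      ext w; simp
  have hcard : Fintype.card {s : Finset (Fin (k+2)) // s.card = 2} = N := by
    rw [Fintype.card_finset_len, Fintype.card_fin, hN]
  let e : Fin N ≃ {s : Finset (Fin (k+2)) // s.card = 2} := (Fintype.equivFinOfCardEq hcard).symm
  let asg : Equiv.Perm (Fin (k+2)) → Fin n → Fin N := fun τ i =>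
    e.symm ⟨(P i).map τ.toEmbedding, by rw [Finset.card_map, hPc]⟩
  have hasg : ∀ τ i j, asg τ i = j ↔ (P i).map τ.toEmbedding = (e j).1 := by
    intro τ i j
    simp only [asg]
    rw [Equiv.symm_apply_eq, Subtype.ext_iff]
  let F' : Profile N (k+2) → Fin (k+2) → ℝ := fun R x => ((k+2).factorial : ℝ)⁻¹ *
    ∑ τ : Equiv.Perm (Fin (k+2)), F (fun i => τ.trans (R (asg τ i))) (τ.symm x)
  have hfac : ((k+2).factorial : ℝ) ≠ 0 := by positivity
  have hcp : (Fintype.card (Equiv.Perm (Fin (k+2))) : ℝ) = ((k+2).factorial : ℝ) := by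
    rw [Fintype.card_perm, Fintype.card_fin]
  have hS' : IsSDS F' := by
    constructor
    · intro R x
      exact mul_nonneg (by positivity) (Finset.sum_nonneg fun τ _ => hF.1 _ _)
    · intro R
      simp only [F']
      rw [← Finset.mul_sum, Finset.sum_comm]
      have : ∀ τ : Equiv.Perm (Fin (k+2)),
          ∑ x, F (fun i => τ.trans (R (asg τ i))) (τ.symm x) = 1 := by
        intro τ
        rw [Equiv.sum_comp τ.symm (fun x => F (fun i => τ.trans (R (asg τ i))) x), hF.2]
      simp only [this, Finset.sum_const, Finset.card_univ, nsmul_eq_mul, mul_one]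
      rw [hcp, inv_mul_cancel₀ hfac]
  have hsep' : ∀ R x, F' R x = ∑ j, pairV u P (e j).1 (R j) x := by
    intro R x
    simp only [F', pairV]
    rw [← Finset.mul_sum, Finset.sum_comm]
    congr 1
    apply Finset.sum_congr rfl
    intro τ _
    rw [hsep, ← Finset.sum_fiberwise univ (asg τ)]
    apply Finset.sum_congr rfl
    intro j _
    simp only [hasg]
    apply Finset.sum_congr rfl
    intro i hi
    simp only [mem_filter, mem_univ, true_and] at hi
    rw [(hasg τ i j).mpr hi]
  have hgood : ∀ j, ∃ M, GoodU (pairV u P (e j).1) M := fun j => pairV_good hu P _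
  choose M hM using hgood
  have hsp' : Strategyproof F' := sep_sp hM hsep'
  have hxy : ∀ j, ∃ p : Fin (k+2) × Fin (k+2), p.1 ≠ p.2 ∧ (e j).1 = {p.1, p.2} := by
    intro j
    obtain ⟨a, b, hab, h⟩ := Finset.card_eq_two.mp (e j).2
    exact ⟨(a, b), hab, h⟩
  choose xy hxy1 hxy2 using hxy
  have hupd : ∀ (R : Profile N (k+2)) j (σ : Equiv.Perm (Fin (k+2))) x,
      F' (Function.update R j σ) x - F' R x =
        pairV u P (e j).1 σ x - pairV u P (e j).1 (R j) x := by
    intro R j σ x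
    rw [hsep', hsep', ← Finset.sum_sub_distrib, Finset.sum_eq_single j]
    · simp
    · intro b _ hb; simp [hb]
    · simp
  have htop : ∀ j (σ : Equiv.Perm (Fin (k+2))), (σ (xy j).1 : ℕ) ≤ 1 → (σ (xy j).2 : ℕ) ≤ 1 →
      TopS σ (e j).1 := by
    intro j σ h1 h2 w hw
    rw [hxy2, mem_insert, mem_singleton] at hw
    rcases hw with rfl | rfl <;> assumption
  have hi : ∀ (i : Fin N) (R : Profile N (k+2)),
          (R i ((xy i).1) : ℕ) = 0 → (R i ((xy i).2) : ℕ) = 1 →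
          F' (swapTop R i (xy i).1 (xy i).2) = F' R := by
    intro i R h0 h1
    funext x
    have t := htop i (R i) (by omega) (by omega)
    have h0' : R i (xy i).1 = 0 := Fin.ext h0
    have h1' : R i (xy i).2 = 1 := Fin.ext (by rw [Fin.val_one]; exact h1)
    have := hupd R i ((R i).trans (Equiv.swap (R i (xy i).1) (R i (xy i).2))) x
    rw [h0', h1', pairV_zero hP t, sub_self] at this
    unfold swapTop
    rw [h0', h1']
    linarith
  refine ⟨F', hS', hsp', ?_, ?_, sep_mix hS' hM hsep', xy, hxy1, ?_, hi, ?_, ?_⟩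
  · apply rd_zero _ hS' hsp'
    · intro j
      obtain ⟨σ, h0, h1⟩ := exists_top (hxy1 j)
      exact ⟨σ, _, _, h0, h1, hi j (fun _ => σ) (by simp [h0]) (by simp [h1])⟩
    · rw [hN]; exact Nat.choose_pos (by omega)
  · rintro R x ⟨w, hw⟩
    have : ∀ τ : Equiv.Perm (Fin (k+2)), F (fun i => τ.trans (R (asg τ i))) (τ.symm x) ≤ β := by
      intro τ
      apply heff
      refine ⟨τ.symm w, fun i => ?_⟩
      simpa using hw _
    have h2 := Finset.sum_le_sum (s := univ) fun τ _ => this τ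
    simp only [Finset.sum_const, Finset.card_univ, nsmul_eq_mul] at h2
    rw [hcp] at h2
    simp only [F']
    rw [inv_mul_le_iff₀ (by positivity)]
    exact h2
  · intro i j hij hc
    rw [← hxy2, ← hxy2] at hc
    exact hij (e.injective (Subtype.ext hc))
  · refine ⟨pairV u P {0, 1} (Equiv.swap 1 2) 2 - pairV u P {0, 1} 1 2, ?_⟩
    intro i a b c R hab hc1 hc2 h0 h1 h2
    have hlt : 2 < k + 2 := by have := (R i c).2; omega
    have h1' : R i b = 1 := Fin.ext (by rw [Fin.val_one]; exact h1)
    have h2' : R i c = 2 := Fin.ext (by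
      rw [h2]; symm; exact Nat.mod_eq_of_lt hlt)
    have t : TopS (R i) (e i).1 := by
      intro w hw
      rw [hxy2, ← hab, mem_insert, mem_singleton] at hw
      rcases hw with rfl | rfl <;> omega
    unfold swapTop
    rw [hupd, pairV_rank u P (e i).2 t, pairV_ref u P (e i).2 t, h1', h2', ← Equiv.trans_assoc,
      Equiv.symm_trans_self, Equiv.refl_trans]
  · have hM0 := pairV_good hu P {0, 1}
    obtain ⟨M0, hM0⟩ := hM0
    have hTid : TopS (1 : Equiv.Perm (Fin (k+2))) {0, 1} := by
      intro w hw
      simp only [mem_insert, mem_singleton] at hw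
      rcases hw with rfl | rfl <;> simp
    have hTsw : TopS ((1 : Equiv.Perm (Fin (k+2))).trans (Equiv.swap 0 1)) {0, 1} := by
      intro w hw
      simp only [mem_insert, mem_singleton] at hw
      rcases hw with rfl | rfl <;> simp
    have h01 : pairV u P {0, 1} 1 0 = pairV u P {0, 1} 1 1 := by
      have a1 := pairV_rank u P (by simp) hTsw 0
      rw [pairV_zero hP hTid] at a1
      simpa using a1
    refine ⟨fun p => if h : p < k+2 then pairV u P {0, 1} 1 ⟨p, h⟩ else 0, ?_, ?_, ?_, ?_, ?_⟩
    · simp only [Nat.zero_lt_succ, dif_pos, show 1 < k + 2 by omega]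
      exact h01
    · simp only [dif_pos, show 1 < k + 2 by omega]
      exact hM0.1 _ _
    · intro p l h2 hpl hl
      simp only [dif_pos hl, dif_pos (hpl.trans_lt hl)]
      exact pairV_mono hu P h2 hpl
    · intro p hp
      simp only [dif_pos hp]
      exact hM0.1 _ _
    · intro R hR x
      rw [hsep']
      apply Finset.sum_congr rfl
      intro i _
      rw [pairV_rank u P (e i).2 (htop i (R i) (hR i).1 (hR i).2)]
      simp

/-- From a strategyproof, `0`-randomly dictatorial, `β`-ex post
efficient mixture of unilaterals on `n` voters, one can construct such an SDS
`F'` on `m(m-1)/2` voters additionally satisfying: (i) every voter `i` is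
`0`-randomly dictatorial for a distinct pair `x_i, y_i`; (ii) there is a
constant `δ` describing the probability gain of a third-ranked alternative
swapped to second place past `y_i`; (iii) on profiles where every voter
top-ranks his pair, `F'` is given by a scoring vector `a` with
`a_1 = a_2 ≥ 0` and `a_3 ≥ … ≥ a_m ≥ 0` (here indexed from `0`). -/
theorem unilateralMix_normal_form (n m : ℕ) (β : ℝ) (hβ0 : 0 ≤ β) (hβ1 : β ≤ 1)
    (F : Profile n m → Fin m → ℝ) (hF : IsSDS F) (hsp : Strategyproof F)
    (hrd : RandDictDegree F 0) (heff : ExPostEff F β)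
    (hmix : MixOf IsUnilateral F) :
    ∃ F' : Profile (m * (m - 1) / 2) m → Fin m → ℝ,
      IsSDS F' ∧ Strategyproof F' ∧ RandDictDegree F' 0 ∧ ExPostEff F' β ∧
      MixOf IsUnilateral F' ∧
      ∃ xy : Fin (m * (m - 1) / 2) → Fin m × Fin m,
        (∀ i, (xy i).1 ≠ (xy i).2) ∧
        (∀ i j, i ≠ j →
          ({(xy i).1, (xy i).2} : Finset (Fin m)) ≠ {(xy j).1, (xy j).2}) ∧
        (∀ (i : Fin (m * (m - 1) / 2)) (R : Profile (m * (m - 1) / 2) m),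
          (R i ((xy i).1) : ℕ) = 0 → (R i ((xy i).2) : ℕ) = 1 →
          F' (swapTop R i (xy i).1 (xy i).2) = F' R) ∧
        (∃ δ : ℝ, ∀ (i : Fin (m * (m - 1) / 2)) (a b c : Fin m)
            (R : Profile (m * (m - 1) / 2) m),
          ({a, b} : Finset (Fin m)) = {(xy i).1, (xy i).2} →
          c ≠ (xy i).1 → c ≠ (xy i).2 →
          (R i a : ℕ) = 0 → (R i b : ℕ) = 1 → (R i c : ℕ) = 2 →
          F' (swapTop R i b c) c - F' R c = δ) ∧
        (∃ a : ℕ → ℝ, a 0 = a 1 ∧ 0 ≤ a 1 ∧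
          (∀ k l : ℕ, 2 ≤ k → k ≤ l → l < m → a l ≤ a k) ∧
          (∀ k : ℕ, k < m → 0 ≤ a k) ∧
          ∀ R : Profile (m * (m - 1) / 2) m,
            (∀ i, (R i ((xy i).1) : ℕ) ≤ 1 ∧ (R i ((xy i).2) : ℕ) ≤ 1) →
            ∀ x, F' R x = ∑ i, a (R i x : ℕ)) := by
  have hn : 0 < n := by
    rcases Nat.eq_zero_or_pos n with rfl | h
    · obtain ⟨-, -, ⟨d, g, ⟨δ, -, h1, -⟩, -⟩, -⟩ := hrd
      simp at h1
    · exact h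
  match m, F, hF, hsp, hrd, heff, hmix with
  | 0, F, hF, _, _, _, _ =>
    have := hF.2 (fun _ => 1)
    simp at this
  | 1, F, hF, hsp, hrd, _, _ =>
    exfalso
    have hdec : DecomposesAt F 1 := by
      refine ⟨_, F, dict_isRD ⟨0, hn⟩, hF, hsp, fun R x => ?_⟩
      have h1 := hF.2 R
      rw [Fin.sum_univ_one] at h1
      have h2 : x = 0 := Subsingleton.elim _ _
      subst h2
      rw [h1]
      simp [dictProb]
    have := hrd.2.2.2 1 zero_le_one le_rfl hdec
    linarith
  | k + 2, F, hF, _, hrd, heff, hmix =>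
    exact normal_form_aux n k _ hn (Nat.choose_two_right _).symm β F hF hrd heff hmix
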